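/- arXiv:2012.01880 — 8 statements merged into one kernel-verified Lean document; each statement's English description precedes it below -/
import Mathlib

section
/- For every integer n ≥ 1 and every function β from {0,1,…,n−1} to the nonempty subsets of {0,1}, there exist a non-decreasing function g : ℕ → ℝ taking only positive values and a constant c > 0 such that for every k ∈ {0,1,…,n−1}: 1 ∈ β(k) if and only if g(k+1) − g(k) ≥ c, and 0 ∈ β(k) if and only if g(k+1) − g(k) ≤ c. -/
/-!
Only the increments of `g` matter: an increment `2c`, `c` or `0` makes the best responses exactly
`{1}`, `{0, 1}` or `{0}`, and as these increments are nonnegative, their partial sums started at a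
positive value form a positive non-decreasing function.
-/

section OrderedGroup

variable {M : Type*} [AddCommGroup M] [PartialOrder M]

open Classical in
/-- A marginal gain `Δg(k)` which, at cost `c`, makes `B` the best-response set. The case `B = ∅`,
which no marginal gain realizes, is given the value `0`. -/
noncomputable def marginalGain (c : M) (B : Set Bool) : M :=
  if true ∈ B then if false ∈ B then c else c + c else 0

variable [IsOrderedAddMonoid M] {c : M}

theorem marginalGain_nonneg (hc : 0 ≤ c) (B : Set Bool) : 0 ≤ marginalGain c B := by
  unfold marginalGain
  split_ifs
  exacts [hc, add_nonneg hc hc, le_rfl]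

theorem le_marginalGain_iff (hc : 0 < c) {B : Set Bool} :
    c ≤ marginalGain c B ↔ true ∈ B := by
  unfold marginalGain
  split_ifs with htrue <;> simp [htrue, hc.le, hc.not_ge]

theorem marginalGain_le_iff (hc : 0 < c) {B : Set Bool} (hB : B.Nonempty) :
    marginalGain c B ≤ c ↔ false ∈ B := by
  have hmem : false ∈ B ∨ true ∈ B := Bool.exists_bool.mp hB
  unfold marginalGain
  split_ifs with htrue hfalse
  · simp [hfalse]
  · simp [hfalse, hc.not_ge]
  · simp [hmem.resolve_right htrue, hc.le]

theorem exists_monotone_sub_eq {d : ℕ → M} (hd : ∀ k, 0 ≤ d k) (a : M) :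
    ∃ g : ℕ → M, Monotone g ∧ g 0 = a ∧ ∀ k, g (k + 1) - g k = d k := by
  refine ⟨fun m => a + ∑ i ∈ Finset.range m, d i, monotone_nat_of_le_succ fun m => ?_, by simp,
    fun k => ?_⟩
  · rw [Finset.sum_range_succ, ← add_assoc]
    exact le_add_of_nonneg_right (hd m)
  · rw [add_sub_add_left_eq_sub, Finset.sum_range_succ_sub_sum]

theorem best_response_realizable_general (hc : 0 < c) (β : ℕ → Set Bool) :
    ∃ g : ℕ → M, Monotone g ∧ (∀ m, 0 < g m) ∧ ∀ k, (β k).Nonempty →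
      (true ∈ β k ↔ c ≤ g (k + 1) - g k) ∧ (false ∈ β k ↔ g (k + 1) - g k ≤ c) := by
  obtain ⟨g, hmono, hzero, hsub⟩ :=
    exists_monotone_sub_eq (fun k => marginalGain_nonneg hc.le (β k)) c
  refine ⟨g, hmono, fun m => hc.trans_le (hzero ▸ hmono m.zero_le), fun k hk => ?_⟩
  rw [hsub k]
  exact ⟨(le_marginalGain_iff hc).symm, (marginalGain_le_iff hc hk).symm⟩

end OrderedGroup

/-- For every integer `n ≥ 1` and every function `β` from `{0,…,n-1}` to the
nonempty subsets of `{0,1}` (strategies encoded as `Bool`, `1 = true`, `0 = false`), there exist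
a non-decreasing function `g : ℕ → ℝ` taking only positive values and a constant `c > 0` such
that for every `k < n`: `1 ∈ β(k)` iff `g(k+1) - g(k) ≥ c`, and `0 ∈ β(k)` iff
`g(k+1) - g(k) ≤ c`. -/
theorem best_response_realizable (n : ℕ) (hn : 1 ≤ n)
    (β : Fin n → Set Bool) (hβ : ∀ k, (β k).Nonempty) :
    ∃ (g : ℕ → ℝ) (c : ℝ), Monotone g ∧ (∀ m : ℕ, 0 < g m) ∧ 0 < c ∧
      ∀ k : Fin n,
        (true ∈ β k ↔ c ≤ g ((k : ℕ) + 1) - g (k : ℕ)) ∧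
        (false ∈ β k ↔ g ((k : ℕ) + 1) - g (k : ℕ) ≤ c) := by
  obtain ⟨g, hmono, hpos, hg⟩ :=
    best_response_realizable_general (one_pos (α := ℝ)) (Function.extend Fin.val β fun _ => ∅)
  exact ⟨g, 1, hmono, hpos, one_pos, fun k => by
    simpa only [Fin.val_injective.extend_apply, hβ k, true_imp_iff] using hg k⟩
end

section
/- The BNPG game on the graph G constructed from the formula φ has a pure strategy Nash equilibrium if and only if φ is satisfiable. -/
/-- The number of neighbors of `v` playing `1` (`true`) in the strategy profile `x`. -/
noncomputable def nOnes {V : Type*} (G : SimpleGraph V) (x : V → Bool) (v : V) : ℕ :=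
  Nat.card {w : V // G.Adj v w ∧ x w = true}

/-- `x` is a pure strategy Nash equilibrium (PSNE) of the BNPG game `(G, g, c)`:
for every player `v`, if `v` plays `1` then `g_v(n_v+1) - g_v(n_v) ≥ c_v`, and if `v` plays `0`
then `g_v(n_v+1) - g_v(n_v) ≤ c_v`. -/
def IsPSNE {V : Type*} (G : SimpleGraph V) (g : V → ℕ → ℝ) (c : V → ℝ) (x : V → Bool) : Prop :=
  ∀ v : V,
    (x v = true → c v ≤ g v (nOnes G x v + 1) - g v (nOnes G x v)) ∧
    (x v = false → g v (nOnes G x v + 1) - g v (nOnes G x v) ≤ c v)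
/-- Vertices of the graph built from the formula: `Sum.inl (i, true)` is the literal vertex
`a_i`, `Sum.inl (i, false)` is `ā_i`, and `Sum.inr j` is the clause vertex `y_j`. -/
abbrev SatV (n m : ℕ) := (Fin n × Bool) ⊕ Fin m

/-- Edges of the graph: `a_i — ā_i` for every variable `i`, and `y_j — f(l)` for every literal
`l` of the clause `C_j`, where `f(x_i) = a_i` and `f(¬x_i) = ā_i`.  (The graph itself is
`SimpleGraph.fromRel` of this relation.) -/
def satRel {n m : ℕ} (clauses : Fin m → Fin 3 → Fin n × Bool) :
    SatV n m → SatV n m → Prop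
  | Sum.inl (i, b), Sum.inl (i', b') => i = i' ∧ b ≠ b'
  | Sum.inr j, Sum.inl l => ∃ t : Fin 3, clauses j t = l
  | _, _ => False

/-- The graph `G` of the reduction. -/
def satGraph {n m : ℕ} (clauses : Fin m → Fin 3 → Fin n × Bool) : SimpleGraph (SatV n m) :=
  SimpleGraph.fromRel (satRel clauses)

/-- `g` for the literal vertices `a_i, ā_i`: values `1000, 1005, 1010, 1015, 1018` at
`0,1,2,3,4` and constant `1018` from `4` on. -/
noncomputable def gLit : ℕ → ℝ
  | 0 => 1000
  | 1 => 1005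
  | 2 => 1010
  | 3 => 1015
  | _ => 1018

/-- `g` for the clause vertices `y_j`: values `1000, 1003, 1008, 1013, 1018` at `0,1,2,3,4`
and constant `1018` from `4` on. -/
noncomputable def gClause : ℕ → ℝ
  | 0 => 1000
  | 1 => 1003
  | 2 => 1008
  | 3 => 1013
  | _ => 1018

/-- The utility functions of the players. -/
noncomputable def satg {n m : ℕ} : SatV n m → ℕ → ℝ
  | Sum.inl _ => gLit
  | Sum.inr _ => gClause

/-!
A clause vertex plays `1` exactly when one of its literals does, and a literal vertex, having degree
three, plays `0` exactly when all its neighbours play `1`.  If a clause vertex played `0`, its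
literals would have a neighbour playing `0` and would play `1`, which makes the clause vertex play
`1`; so in equilibrium every clause vertex plays `1`.  Then a literal plays `0` exactly when its
negation plays `1`, so the profile is a truth assignment, and it satisfies every clause.
Conversely, a satisfying assignment with all clause vertices playing `1` obeys both rules.
-/

lemma ncard_setOf_exists_eq_card_of_injective {α β γ : Type*} {f : α → β → γ}
    (hf : ∀ a, Function.Injective (f a)) (c : γ) :
    {a | ∃ b, f a b = c}.ncard = Nat.card {p : α × β // f p.1 p.2 = c} := by
  have himage : {a | ∃ b, f a b = c} = Prod.fst '' {p : α × β | f p.1 p.2 = c} := by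
    ext a
    simp
  have hinj : Set.InjOn Prod.fst {p : α × β | f p.1 p.2 = c} := by
    rintro ⟨a, b⟩ hb ⟨_, b'⟩ hb' rfl
    exact congrArg (Prod.mk a) (hf a (hb.trans hb'.symm))
  rw [himage, hinj.ncard_image]
  rfl

section Game

variable {V : Type*} {G : SimpleGraph V} {v : V}

lemma nOnes_pos_iff (hfin : (G.neighborSet v).Finite) (x : V → Bool) :
    0 < nOnes G x v ↔ ∃ w, G.Adj v w ∧ x w = true :=
  Set.ncard_pos (hfin.subset fun _ hw => hw.1)

lemma nOnes_le_ncard_neighborSet (hfin : (G.neighborSet v).Finite) (x : V → Bool) :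
    nOnes G x v ≤ (G.neighborSet v).ncard :=
  Set.ncard_le_ncard (fun _ hw => hw.1) hfin

lemma nOnes_lt_ncard_neighborSet_iff (hfin : (G.neighborSet v).Finite) (x : V → Bool) :
    nOnes G x v < (G.neighborSet v).ncard ↔ ∃ w, G.Adj v w ∧ x w = false := by
  have hsub : {w | G.Adj v w ∧ x w = true} ⊆ G.neighborSet v := fun _ hw => hw.1
  constructor
  · intro hlt
    obtain ⟨w, hw, hw'⟩ := Set.exists_mem_notMem_of_ncard_lt_ncard hlt (hfin.subset hsub)
    exact ⟨w, hw, Bool.eq_false_of_not_eq_true fun hx => hw' ⟨hw, hx⟩⟩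
  · rintro ⟨w, hw, hx⟩
    refine Set.ncard_lt_ncard ((Set.ssubset_iff_of_subset hsub).2 ⟨w, hw, ?_⟩) hfin
    simp [hx]

lemma isPSNE_iff_of_forall_ne {g : V → ℕ → ℝ} {c : V → ℝ} {x : V → Bool}
    (hne : ∀ v, g v (nOnes G x v + 1) - g v (nOnes G x v) ≠ c v) :
    IsPSNE G g c x ↔
      ∀ v, x v = true ↔ c v < g v (nOnes G x v + 1) - g v (nOnes G x v) := by
  refine forall_congr' fun v => ?_
  have hv := hne v
  cases x v
  · simp [hv.le_iff_lt]
  · simp [hv.symm.le_iff_lt]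

end Game

section Reduction

variable {n m : ℕ} {clauses : Fin m → Fin 3 → Fin n × Bool}

lemma gLit_succ_sub (k : ℕ) :
    gLit (k + 1) - gLit k = if k < 3 then 5 else if k = 3 then 3 else 0 := by
  rcases k with _ | _ | _ | _ | k
  case succ.succ.succ.succ => simp [gLit, add_assoc]
  all_goals norm_num [gLit]

lemma gClause_succ_sub (k : ℕ) :
    gClause (k + 1) - gClause k = if k = 0 then 3 else if k < 4 then 5 else 0 := by
  rcases k with _ | _ | _ | _ | k
  case succ.succ.succ.succ => simp [gClause, add_assoc]
  all_goals norm_num [gClause]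

lemma satg_succ_sub_ne_four (v : SatV n m) (k : ℕ) : satg v (k + 1) - satg v k ≠ 4 := by
  rcases v with _ | _
  · rw [satg, gLit_succ_sub]
    split_ifs <;> norm_num
  · rw [satg, gClause_succ_sub]
    split_ifs <;> norm_num

lemma four_lt_gLit_succ_sub_iff (k : ℕ) : 4 < gLit (k + 1) - gLit k ↔ k < 3 := by
  rw [gLit_succ_sub]
  split_ifs <;> norm_num <;> lia

lemma four_lt_gClause_succ_sub_iff (k : ℕ) :
    4 < gClause (k + 1) - gClause k ↔ 0 < k ∧ k < 4 := by
  rw [gClause_succ_sub]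
  split_ifs <;> norm_num <;> lia

lemma neighborSet_satGraph_literal (l : Fin n × Bool) :
    (satGraph clauses).neighborSet (.inl l) =
      insert (.inl (l.1, !l.2)) (Sum.inr '' {j | ∃ t, clauses j t = l}) := by
  obtain ⟨i, b⟩ := l
  ext (⟨i', b'⟩ | j)
  · cases b <;> cases b' <;> simp [satGraph, satRel, eq_comm]
  · simp [satGraph, satRel]

lemma neighborSet_satGraph_clause (j : Fin m) :
    (satGraph clauses).neighborSet (.inr j) = Set.range fun t => .inl (clauses j t) := by
  ext (l | j') <;> simp [satGraph, satRel]

lemma ncard_neighborSet_satGraph_literal (l : Fin n × Bool) :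
    ((satGraph clauses).neighborSet (.inl l)).ncard = {j | ∃ t, clauses j t = l}.ncard + 1 := by
  rw [neighborSet_satGraph_literal, Set.ncard_insert_of_notMem (by simp) (Set.toFinite _),
    Set.ncard_image_of_injective _ Sum.inr_injective]

lemma ncard_neighborSet_satGraph_clause_le (j : Fin m) :
    ((satGraph clauses).neighborSet (.inr j)).ncard ≤ 3 := by
  rw [neighborSet_satGraph_clause, ← Set.image_univ]
  simpa using Set.ncard_image_le (f := fun t => (Sum.inl (clauses j t) : SatV n m)) Set.finite_univ

lemma isPSNE_satGraph_iff_nOnes (x : SatV n m → Bool) :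
    IsPSNE (satGraph clauses) satg (fun _ => 4) x ↔
      (∀ l, x (.inl l) = true ↔ nOnes (satGraph clauses) x (.inl l) < 3) ∧
        ∀ j, x (.inr j) = true ↔ 0 < nOnes (satGraph clauses) x (.inr j) := by
  rw [isPSNE_iff_of_forall_ne fun v => satg_succ_sub_ne_four v _, Sum.forall]
  refine and_congr (forall_congr' fun l => ?_) (forall_congr' fun j => ?_)
  · rw [satg, four_lt_gLit_succ_sub_iff]
  · have hle := (nOnes_le_ncard_neighborSet (Set.toFinite _) x).trans
      (ncard_neighborSet_satGraph_clause_le (clauses := clauses) j)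
    rw [satg, four_lt_gClause_succ_sub_iff, and_iff_left (Nat.lt_succ_of_le hle)]

lemma isPSNE_satGraph_iff (hocc : ∀ l, {j | ∃ t, clauses j t = l}.ncard = 2)
    (x : SatV n m → Bool) :
    IsPSNE (satGraph clauses) satg (fun _ => 4) x ↔
      (∀ l, x (.inl l) = true ↔
        x (.inl (l.1, !l.2)) = false ∨ ∃ j, (∃ t, clauses j t = l) ∧ x (.inr j) = false) ∧
      ∀ j, x (.inr j) = true ↔ ∃ t, x (.inl (clauses j t)) = true := by
  rw [isPSNE_satGraph_iff_nOnes]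
  refine and_congr (forall_congr' fun l => iff_congr Iff.rfl ?_)
    (forall_congr' fun j => iff_congr Iff.rfl ?_)
  · have hlt := nOnes_lt_ncard_neighborSet_iff
      (Set.toFinite ((satGraph clauses).neighborSet (.inl l))) x
    rw [ncard_neighborSet_satGraph_literal, hocc] at hlt
    rw [hlt]
    simp only [← SimpleGraph.mem_neighborSet, neighborSet_satGraph_literal, Set.exists_mem_insert]
    simp
  · rw [nOnes_pos_iff (Set.toFinite _)]
    simp only [← SimpleGraph.mem_neighborSet, neighborSet_satGraph_clause, Set.exists_range_iff]

/-- The strategy profile encoding the truth assignment `h`: the literal vertices true under `h` and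
all clause vertices play `1`.  The equilibria are exactly the profiles of satisfying assignments. -/
def assignmentProfile (m : ℕ) (h : Fin n → Bool) : SatV n m → Bool :=
  Sum.elim (fun l => h l.1 == l.2) fun _ => true

lemma isPSNE_satGraph_iff_exists_assignment (hocc : ∀ l, {j | ∃ t, clauses j t = l}.ncard = 2)
    (x : SatV n m → Bool) :
    IsPSNE (satGraph clauses) satg (fun _ => 4) x ↔
      ∃ h : Fin n → Bool, (∀ j, ∃ t, h (clauses j t).1 = (clauses j t).2) ∧
        x = assignmentProfile m h := by
  rw [isPSNE_satGraph_iff hocc]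
  constructor
  · rintro ⟨hlit, hcl⟩
    have clause_true (j : Fin m) : x (.inr j) = true := by
      by_contra hj
      have hlit_true := (hlit (clauses j 0)).2 (.inr ⟨j, ⟨0, rfl⟩, Bool.eq_false_of_not_eq_true hj⟩)
      exact hj ((hcl j).2 ⟨0, hlit_true⟩)
    have literal_neg (l : Fin n × Bool) : x (.inl l) = true ↔ x (.inl (l.1, !l.2)) = false := by
      simpa [clause_true] using hlit l
    have hx : x = assignmentProfile m fun i => x (.inl (i, true)) := by
      ext (⟨i, _ | _⟩ | j)
      · simpa [assignmentProfile] using literal_neg (i, false)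
      · simp [assignmentProfile]
      · simp [assignmentProfile, clause_true]
    refine ⟨_, fun j => ?_, hx⟩
    obtain ⟨t, ht⟩ := (hcl j).1 (clause_true j)
    rw [hx] at ht
    exact ⟨t, by simpa [assignmentProfile] using ht⟩
  · rintro ⟨h, hsat, rfl⟩
    simp [assignmentProfile, hsat, Bool.eq_not]

/-- `hocc` counts clauses rather than positions, so a literal may be repeated within a clause or
occur together with its negation. -/
theorem psne_iff_satisfiable_general (hocc : ∀ l, {j | ∃ t, clauses j t = l}.ncard = 2) :
    (∃ x : SatV n m → Bool, IsPSNE (satGraph clauses) satg (fun _ => 4) x) ↔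
      ∃ h : Fin n → Bool, ∀ j : Fin m, ∃ t : Fin 3, h (clauses j t).1 = (clauses j t).2 := by
  simp only [isPSNE_satGraph_iff_exists_assignment hocc]
  exact ⟨fun ⟨_, h, hsat, _⟩ => ⟨h, hsat⟩, fun ⟨h, hsat⟩ => ⟨_, h, hsat, rfl⟩⟩

end Reduction

/-- Let `φ` be a CNF formula with `m` clauses, each consisting of exactly three
literals on three distinct variables (clause `j`'s `t`-th literal is the pair
`clauses j t = (variable, polarity)`), in which every variable occurs exactly twice positively
and exactly twice negatively.  The BNPG game on the graph constructed from `φ`, with `c_v = 4`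
for every vertex, has a pure strategy Nash equilibrium iff `φ` is satisfiable. -/
theorem psne_iff_satisfiable (n m : ℕ)
    (clauses : Fin m → Fin 3 → Fin n × Bool)
    (hdistinct : ∀ j : Fin m, Function.Injective fun t : Fin 3 => (clauses j t).1)
    (hocc : ∀ (i : Fin n) (b : Bool),
      Nat.card {p : Fin m × Fin 3 // clauses p.1 p.2 = (i, b)} = 2) :
    (∃ x : SatV n m → Bool, IsPSNE (satGraph clauses) satg (fun _ => 4) x) ↔
      ∃ h : Fin n → Bool, ∀ j : Fin m, ∃ t : Fin 3, h (clauses j t).1 = (clauses j t).2 :=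
  psne_iff_satisfiable_general fun l =>
    (ncard_setOf_exists_eq_card_of_injective (fun j => (hdistinct j).of_comp) l).trans
      (hocc l.1 l.2)
end

section
/- Every pure strategy Nash equilibrium x of the BNPG game on the graph H constructed from the General Factor instance satisfies x_{d_1} = 1, x_{d_2} = 0, x_{u′_{n+1}} = 0, and x_{u_i} = x_{u′_i} = 1 for every i ∈ [n]. -/
/-- Vertices of the graph `H` built from the General Factor instance on `G₀`:
`uVert i = Sum.inl i` is `u_i`; `aVert e = Sum.inr (Sum.inl e)` is `a_{{i,j}}` for the edge
`e = {v_i, v_j}` of `G₀`; `u'Vert i = Sum.inr (Sum.inr (Sum.inl i))` is `u′_i`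
(for `i : Fin (n+1)`); `dVert false` is `d_1` and `dVert true` is `d_2`. -/
abbrev GFV (n : ℕ) (G₀ : SimpleGraph (Fin n)) :=
  Fin n ⊕ (↥G₀.edgeSet ⊕ (Fin (n + 1) ⊕ Bool))

abbrev uVert {n : ℕ} {G₀ : SimpleGraph (Fin n)} (i : Fin n) : GFV n G₀ := Sum.inl i
abbrev aVert {n : ℕ} {G₀ : SimpleGraph (Fin n)} (e : ↥G₀.edgeSet) : GFV n G₀ :=
  Sum.inr (Sum.inl e)
abbrev u'Vert {n : ℕ} {G₀ : SimpleGraph (Fin n)} (i : Fin (n + 1)) : GFV n G₀ :=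
  Sum.inr (Sum.inr (Sum.inl i))
abbrev dVert {n : ℕ} {G₀ : SimpleGraph (Fin n)} (b : Bool) : GFV n G₀ :=
  Sum.inr (Sum.inr (Sum.inr b))

/-- Edges of `H`: `{u_i, a_e}` whenever `i ∈ e`; `{u_i, u′_i}` for `i ∈ [n]`;
`{d_1, u′_i}` for all `i ∈ [n+1]` (this covers both `{d_1, u′_i}, i ∈ [n]` and
`{d_1, u′_{n+1}}`); `{d_2, u_i}` for `i ∈ [n]`; and `{d_2, u′_{n+1}}`.
(The graph `H` is `SimpleGraph.fromRel` of this relation.) -/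
def gfRel {n : ℕ} (G₀ : SimpleGraph (Fin n)) : GFV n G₀ → GFV n G₀ → Prop
  | Sum.inl i, Sum.inr (Sum.inl e) => i ∈ e.1
  | Sum.inl i, Sum.inr (Sum.inr (Sum.inl i')) => (i' : ℕ) = (i : ℕ)
  | Sum.inr (Sum.inr (Sum.inr false)), Sum.inr (Sum.inr (Sum.inl _)) => True
  | Sum.inr (Sum.inr (Sum.inr true)), Sum.inl _ => True
  | Sum.inr (Sum.inr (Sum.inr true)), Sum.inr (Sum.inr (Sum.inl i')) => (i' : ℕ) = n
  | _, _ => False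

/-- The graph `H` of the reduction from General Factor. -/
def gfGraph {n : ℕ} (G₀ : SimpleGraph (Fin n)) : SimpleGraph (GFV n G₀) :=
  SimpleGraph.fromRel (gfRel G₀)

/-
In an equilibrium a player `u′_i` computes the conjunction of its two neighbours, and `d_2` computes
the negated disjunction of its neighbours. If `u′_{n+1}` played `1`, so would its neighbour `d_2`,
which tolerates no active neighbour; hence `u′_{n+1}` plays `0`. If `d_1` played `0`, every `u′_i`
would play `0` and `d_1` would prefer `1`; hence `d_1` plays `1`, forcing `d_2` to play `0`.
So `d_1` sees `0` or `n` active players among the `u′_i`. If it saw none, every `u_i` would play `0`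
and `d_2` would play `1`; hence it sees `n`, which must be all of them but `u′_{n+1}`.
-/

section ActiveNeighbors

variable {V : Type*} {G : SimpleGraph V} {x : V → Bool} {v : V}

theorem nOnes_eq_ncard : nOnes G x v = {w | G.Adj v w ∧ x w = true}.ncard := rfl

theorem nOnes_eq_zero_iff [Finite (G.neighborSet v)] :
    nOnes G x v = 0 ↔ ∀ w ∈ G.neighborSet v, x w = false := by
  have hfin : {w | G.Adj v w ∧ x w = true}.Finite :=
    (Set.toFinite (G.neighborSet v)).subset fun _ hw => hw.1
  simp [nOnes_eq_ncard, Set.ncard_eq_zero hfin, Set.eq_empty_iff_forall_notMem]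

theorem nOnes_eq_ncard_iff {S : Set V} (hfin : S.Finite) (hadj : S ⊆ G.neighborSet v)
    (hones : ∀ w ∈ G.neighborSet v, x w = true → w ∈ S) :
    nOnes G x v = S.ncard ↔ ∀ w ∈ S, x w = true := by
  have hsub : {w | G.Adj v w ∧ x w = true} ⊆ S := fun w hw => hones w hw.1 hw.2
  rw [nOnes_eq_ncard]
  constructor
  · intro hcard w hw
    rw [← Set.eq_of_subset_of_ncard_le hsub hcard.ge hfin] at hw
    exact hw.2
  · intro hS
    rw [hsub.antisymm fun w hw => ⟨hadj hw, hS w hw⟩]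

theorem nOnes_eq_two_iff {a b : V} (hab : a ≠ b) (hN : G.neighborSet v = {a, b}) :
    nOnes G x v = 2 ↔ x a = true ∧ x b = true := by
  rw [← Set.ncard_pair hab, ← hN,
    nOnes_eq_ncard_iff (hN ▸ Set.toFinite {a, b}) subset_rfl fun _ hw _ => hw, hN]
  simp only [Set.mem_insert_iff, Set.mem_singleton_iff, forall_eq_or_imp, forall_eq]

end ActiveNeighbors

namespace IsPSNE

variable {V : Type*} {G : SimpleGraph V} {g : V → ℕ → ℝ} {c : V → ℝ} {x : V → Bool} {v : V}

theorem eq_true_of_lt (hx : IsPSNE G g c x)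
    (h : c v < g v (nOnes G x v + 1) - g v (nOnes G x v)) : x v = true :=
  Bool.of_not_eq_false fun hv => ((hx v).2 hv).not_gt h

theorem eq_false_of_lt (hx : IsPSNE G g c x)
    (h : g v (nOnes G x v + 1) - g v (nOnes G x v) < c v) : x v = false :=
  Bool.of_not_eq_true fun hv => ((hx v).1 hv).not_gt h

theorem eq_true_iff_nOnes_eq (hx : IsPSNE G g c x) {m : ℕ}
    (hm : c v < g v (m + 1) - g v m) (hne : ∀ k ≠ m, g v (k + 1) - g v k < c v) :
    x v = true ↔ nOnes G x v = m := by
  constructor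
  · intro hv
    by_contra h
    exact ne_true_of_eq_false (hx.eq_false_of_lt (hne _ h)) hv
  · rintro rfl
    exact hx.eq_true_of_lt hm

theorem eq_true_iff_and (hx : IsPSNE G g c x) {a b : V} (hab : a ≠ b)
    (hN : G.neighborSet v = {a, b}) (htwo : c v < g v (2 + 1) - g v 2)
    (hne : ∀ k ≠ 2, g v (k + 1) - g v k < c v) :
    x v = true ↔ x a = true ∧ x b = true :=
  (hx.eq_true_iff_nOnes_eq htwo hne).trans (nOnes_eq_two_iff hab hN)

theorem eq_true_iff_forall_eq_false (hx : IsPSNE G g c x) [Finite (G.neighborSet v)]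
    (hzero : c v < g v (0 + 1) - g v 0) (hne : ∀ k ≠ 0, g v (k + 1) - g v k < c v) :
    x v = true ↔ ∀ w ∈ G.neighborSet v, x w = false :=
  (hx.eq_true_iff_nOnes_eq hzero hne).trans nOnes_eq_zero_iff

end IsPSNE

section Neighborhoods

variable {n : ℕ} (G₀ : SimpleGraph (Fin n))

theorem gfGraph_neighborSet_u'Vert_castSucc (i : Fin n) :
    (gfGraph G₀).neighborSet (u'Vert i.castSucc) = {dVert false, uVert i} := by
  have := i.isLt
  ext w
  rcases w with j | e | j | (_ | _) <;> simp [gfGraph, gfRel, Fin.ext_iff] <;> omega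

theorem gfGraph_neighborSet_u'Vert_last :
    (gfGraph G₀).neighborSet (u'Vert (Fin.last n)) = {dVert false, dVert true} := by
  ext w
  rcases w with j | e | j | (_ | _)
  case inl => simp [gfGraph, gfRel, j.isLt.ne']
  all_goals simp [gfGraph, gfRel]

theorem gfGraph_neighborSet_dVert_false :
    (gfGraph G₀).neighborSet (dVert false) =
      insert (u'Vert (Fin.last n)) (Set.range fun i : Fin n => u'Vert i.castSucc) := by
  ext w
  rcases w with j | e | j | (_ | _)
  case inr.inr.inl => induction j using Fin.lastCases <;> simp [gfGraph, gfRel]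
  all_goals simp [gfGraph, gfRel]

theorem gfGraph_neighborSet_dVert_true :
    (gfGraph G₀).neighborSet (dVert true) = insert (u'Vert (Fin.last n)) (Set.range uVert) := by
  ext w
  rcases w with j | e | j | (_ | _) <;> simp [gfGraph, gfRel, Fin.ext_iff]

end Neighborhoods

section Counting

variable {n : ℕ} {G₀ : SimpleGraph (Fin n)} {x : GFV n G₀ → Bool}

theorem nOnes_dVert_false_eq_zero_iff :
    nOnes (gfGraph G₀) x (dVert false) = 0 ↔
      x (u'Vert (Fin.last n)) = false ∧ ∀ i : Fin n, x (u'Vert i.castSucc) = false := by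
  simp only [nOnes_eq_zero_iff, gfGraph_neighborSet_dVert_false, Set.forall_mem_insert,
    Set.forall_mem_range]

theorem nOnes_dVert_false_eq_iff (hlast : x (u'Vert (Fin.last n)) = false) :
    nOnes (gfGraph G₀) x (dVert false) = n ↔ ∀ i : Fin n, x (u'Vert i.castSucc) = true := by
  set S : Set (GFV n G₀) := Set.range fun i : Fin n => u'Vert i.castSucc
  have hN : (gfGraph G₀).neighborSet (dVert false) = insert (u'Vert (Fin.last n)) S :=
    gfGraph_neighborSet_dVert_false G₀
  have hinj : Function.Injective fun i : Fin n => (u'Vert i.castSucc : GFV n G₀) :=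
    fun i j hij => by simpa using hij
  have hcard : S.ncard = n := (Set.ncard_range_of_injective hinj).trans (Nat.card_fin n)
  have hones : ∀ w ∈ (gfGraph G₀).neighborSet (dVert false), x w = true → w ∈ S := by
    rw [hN]
    rintro w (rfl | hw) hxw
    · exact absurd hxw (ne_true_of_eq_false hlast)
    · exact hw
  calc nOnes (gfGraph G₀) x (dVert false) = n
      ↔ nOnes (gfGraph G₀) x (dVert false) = S.ncard := by rw [hcard]
    _ ↔ ∀ w ∈ S, x w = true :=
      nOnes_eq_ncard_iff S.toFinite (hN ▸ Set.subset_insert _ _) hones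
    _ ↔ ∀ i : Fin n, x (u'Vert i.castSucc) = true := Set.forall_mem_range

end Counting

theorem gf_psne_structure_general {n : ℕ} {G₀ : SimpleGraph (Fin n)}
    {g : GFV n G₀ → ℕ → ℝ} {c : GFV n G₀ → ℝ}
    (hu'_two : ∀ i : Fin (n + 1), c (u'Vert i) < g (u'Vert i) (2 + 1) - g (u'Vert i) 2)
    (hu'_ne : ∀ i : Fin (n + 1), ∀ k ≠ 2, g (u'Vert i) (k + 1) - g (u'Vert i) k < c (u'Vert i))
    (hd1_zero : c (dVert false) < g (dVert false) (0 + 1) - g (dVert false) 0)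
    (hd1_ne : ∀ k, k ≠ 0 → k ≠ n →
      g (dVert false) (k + 1) - g (dVert false) k < c (dVert false))
    (hd2_zero : c (dVert true) < g (dVert true) (0 + 1) - g (dVert true) 0)
    (hd2_ne : ∀ k ≠ 0, g (dVert true) (k + 1) - g (dVert true) k < c (dVert true))
    {x : GFV n G₀ → Bool} (hx : IsPSNE (gfGraph G₀) g c x) :
    x (dVert false) = true ∧ x (dVert true) = false ∧ x (u'Vert (Fin.last n)) = false ∧
      ∀ i : Fin n, x (uVert i) = true ∧ x (u'Vert i.castSucc) = true := by
  have hand (i : Fin n) :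
      x (u'Vert i.castSucc) = true ↔ x (dVert false) = true ∧ x (uVert i) = true :=
    hx.eq_true_iff_and (by simp) (gfGraph_neighborSet_u'Vert_castSucc G₀ i) (hu'_two _) (hu'_ne _)
  have hand_last :
      x (u'Vert (Fin.last n)) = true ↔ x (dVert false) = true ∧ x (dVert true) = true :=
    hx.eq_true_iff_and (by simp) (gfGraph_neighborSet_u'Vert_last G₀) (hu'_two _) (hu'_ne _)
  have hnor : x (dVert true) = true ↔
      x (u'Vert (Fin.last n)) = false ∧ ∀ i : Fin n, x (uVert i) = false := by
    rw [hx.eq_true_iff_forall_eq_false hd2_zero hd2_ne, gfGraph_neighborSet_dVert_true,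
      Set.forall_mem_insert, Set.forall_mem_range]
  have hlast : x (u'Vert (Fin.last n)) = false :=
    Bool.of_not_eq_true fun h => ne_true_of_eq_false (hnor.1 (hand_last.1 h).2).1 h
  have hd1 : x (dVert false) = true := by
    by_contra hoff
    have hu' (i : Fin n) : x (u'Vert i.castSucc) = false :=
      Bool.of_not_eq_true fun h => hoff ((hand i).1 h).1
    have hzero := nOnes_dVert_false_eq_zero_iff.2 ⟨hlast, hu'⟩
    exact hoff (hx.eq_true_of_lt (hzero ▸ hd1_zero))
  have hd2 : x (dVert true) = false :=
    Bool.of_not_eq_true fun h => ne_true_of_eq_false hlast (hand_last.2 ⟨hd1, h⟩)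
  have hne_zero : nOnes (gfGraph G₀) x (dVert false) ≠ 0 := by
    intro hzero
    have hu' := (nOnes_dVert_false_eq_zero_iff.1 hzero).2
    have hu (i : Fin n) : x (uVert i) = false :=
      Bool.of_not_eq_true fun h => ne_true_of_eq_false (hu' i) ((hand i).2 ⟨hd1, h⟩)
    exact ne_true_of_eq_false hd2 (hnor.2 ⟨hlast, hu⟩)
  have hn : nOnes (gfGraph G₀) x (dVert false) = n := by
    by_contra hne
    exact ne_true_of_eq_false (hx.eq_false_of_lt (hd1_ne _ hne_zero hne)) hd1
  have hall := (nOnes_dVert_false_eq_iff hlast).1 hn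
  exact ⟨hd1, hd2, hlast, fun i => ⟨((hand i).1 (hall i)).2, hall i⟩⟩

/-- With the BNPG game on `H` as in the General Factor reduction, every pure
strategy Nash equilibrium `x` satisfies `x_{d_1} = 1`, `x_{d_2} = 0`, `x_{u′_{n+1}} = 0`, and
`x_{u_i} = x_{u′_i} = 1` for every `i ∈ [n]`. -/
theorem gf_psne_structure (n : ℕ) (G₀ : SimpleGraph (Fin n)) (K : Fin n → Set ℕ)
    (hK : ∀ i : Fin n, K i ⊆ {k | k ≤ Nat.card (G₀.neighborSet i)})
    (g : GFV n G₀ → ℕ → ℝ) (c : GFV n G₀ → ℝ)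
    (hMono : ∀ v, Monotone (g v)) (hc : ∀ v, 0 < c v)
    (hu : ∀ (i : Fin n) (k : ℕ),
      (1 ≤ k ∧ k - 1 ∈ K i → c (uVert i) < g (uVert i) (k + 1) - g (uVert i) k) ∧
      (¬(1 ≤ k ∧ k - 1 ∈ K i) → g (uVert i) (k + 1) - g (uVert i) k < c (uVert i)))
    (ha : ∀ (e : ↥G₀.edgeSet) (k : ℕ),
      g (aVert e) (k + 1) - g (aVert e) k = c (aVert e))
    (hu' : ∀ (i : Fin (n + 1)) (k : ℕ),
      (k = 2 → c (u'Vert i) < g (u'Vert i) (k + 1) - g (u'Vert i) k) ∧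
      (k ≠ 2 → g (u'Vert i) (k + 1) - g (u'Vert i) k < c (u'Vert i)))
    (hd1 : ∀ k : ℕ,
      (k = 0 ∨ k = n →
        c (dVert (G₀ := G₀) false) < g (dVert false) (k + 1) - g (dVert false) k) ∧
      (¬(k = 0 ∨ k = n) →
        g (dVert (G₀ := G₀) false) (k + 1) - g (dVert false) k < c (dVert false)))
    (hd2 : ∀ k : ℕ,
      (k = 0 → c (dVert (G₀ := G₀) true) < g (dVert true) (k + 1) - g (dVert true) k) ∧
      (1 ≤ k → g (dVert (G₀ := G₀) true) (k + 1) - g (dVert true) k < c (dVert true)))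
    (x : GFV n G₀ → Bool) (hx : IsPSNE (gfGraph G₀) g c x) :
    x (dVert false) = true ∧ x (dVert true) = false ∧ x (u'Vert (Fin.last n)) = false ∧
      ∀ i : Fin n, x (uVert i) = true ∧ x (u'Vert i.castSucc) = true :=
  gf_psne_structure_general (fun i => (hu' i 2).1 rfl) (fun i k => (hu' i k).2)
    ((hd1 0).1 (.inl rfl)) (fun k h0 hn => (hd1 k).2 (not_or.2 ⟨h0, hn⟩))
    ((hd2 0).1 rfl) (fun k hk => (hd2 k).2 (Nat.one_le_iff_ne_zero.2 hk)) hx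
end

section
/- The heterogeneous BNPG game on G has a pure strategy Nash equilibrium if and only if the fully homogeneous BNPG game (g, c) on H has a pure strategy Nash equilibrium. -/
/-- Vertices of the graph `H`: `Sum.inl i` is `u_i` (for the player `v_i` of `G`), and
`Sum.inr ⟨i, a⟩` is one of the `2 + (i-1)·n` pendant vertices `a^i_1, …, a^i_{2+(i-1)n}`
attached to `u_i` (here `i` is `0`-indexed, so the count is `2 + i·n`). -/
abbrev HomV (n : ℕ) := Fin n ⊕ (Σ i : Fin n, Fin (2 + (i : ℕ) * n))

/-- Edges of `H`: `{u_i, u_j}` whenever `{v_i, v_j}` is an edge of `G`, and each pendant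
vertex `a^i_j` is adjacent exactly to `u_i`.  (`H` is `SimpleGraph.fromRel` of this.) -/
def homRel {n : ℕ} (G₀ : SimpleGraph (Fin n)) : HomV n → HomV n → Prop
  | Sum.inl i, Sum.inl j => G₀.Adj i j
  | Sum.inl i, Sum.inr p => p.1 = i
  | _, _ => False

/-- The graph `H` of the heterogeneous-to-fully-homogeneous reduction. -/
def homGraph {n : ℕ} (G₀ : SimpleGraph (Fin n)) : SimpleGraph (HomV n) :=
  SimpleGraph.fromRel (homRel G₀)

/-!
A leaf of `H` has at most one neighbour, so it only ever faces the margins `Δg(0)` and `Δg(1)`,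
both of which exceed `c`: in every equilibrium all leaves play `1`. The `2 + (i-1)·n` leaves at
`u_i` therefore shift the number of contributing neighbours of `u_i` by exactly that amount. Since a
player of `G` has at most `n - 1` neighbours, the counts that can occur at different `u_i` lie in
disjoint blocks of length `n`, and the single function `g` imitates `g_{v_i}` on the `i`-th block.
Equilibria of the two games thus correspond under restriction to the vertices `u_i`.
-/

/-- Strategy `a` is a best response of a player with externality function `g` and cost `c`, `m` of
whose neighbours play `1`. -/
def IsBestResponse (g : ℕ → ℝ) (c : ℝ) (m : ℕ) (a : Bool) : Prop :=
  (a = true → c ≤ g (m + 1) - g m) ∧ (a = false → g (m + 1) - g m ≤ c)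

theorem isPSNE_iff_forall_isBestResponse {V : Type*} {G : SimpleGraph V} {g : V → ℕ → ℝ}
    {c : V → ℝ} {x : V → Bool} :
    IsPSNE G g c x ↔ ∀ v, IsBestResponse (g v) (c v) (nOnes G x v) (x v) :=
  Iff.rfl

theorem isBestResponse_iff_eq_true {g : ℕ → ℝ} {c : ℝ} {m : ℕ} (h : c < g (m + 1) - g m)
    {a : Bool} : IsBestResponse g c m a ↔ a = true := by
  grind [IsBestResponse]

theorem isBestResponse_congr {g g' : ℕ → ℝ} {c c' : ℝ} {m m' : ℕ}
    (hle : c ≤ g (m + 1) - g m ↔ c' ≤ g' (m' + 1) - g' m')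
    (hge : g (m + 1) - g m ≤ c ↔ g' (m' + 1) - g' m' ≤ c') (a : Bool) :
    IsBestResponse g c m a ↔ IsBestResponse g' c' m' a :=
  and_congr (imp_congr_right fun _ => hle) (imp_congr_right fun _ => hge)

theorem nOnes_le_degree {V : Type*} (G : SimpleGraph V) (x : V → Bool) (v : V)
    [Fintype (G.neighborSet v)] : nOnes G x v ≤ G.degree v := by
  rw [← G.card_neighborSet_eq_degree v, ← Nat.card_eq_fintype_card]
  exact Nat.card_mono (Set.toFinite (G.neighborSet v)) fun _ hw => hw.1

section PendantGraph

variable {V : Type*} (G : SimpleGraph V) (P : V → Type*)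

/-- The graph obtained from `G` by attaching to each vertex `v` a family of leaves indexed by
`P v`. -/
def pendantGraph : SimpleGraph (V ⊕ Σ v, P v) where
  Adj
    | .inl v, .inl w => G.Adj v w
    | .inl v, .inr p => p.1 = v
    | .inr p, .inl v => p.1 = v
    | .inr _, .inr _ => False
  symm := ⟨by
    rintro (v | p) (w | q) h
    exacts [h.symm, h, h, h]⟩
  loopless := ⟨by
    rintro (v | p) h
    exacts [G.loopless.irrefl v h, h]⟩

variable (y : (V ⊕ Σ v, P v) → Bool)

theorem nOnes_pendantGraph_inr_le_one (p : Σ v, P v) :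
    nOnes (pendantGraph G P) y (.inr p) ≤ 1 := by
  have eq_inl : ∀ w, (pendantGraph G P).Adj (.inr p) w → w = .inl p.1
    | .inl _, h => congrArg Sum.inl (Eq.symm h)
  have : Subsingleton {w // (pendantGraph G P).Adj (.inr p) w ∧ y w = true} :=
    ⟨fun a b => Subtype.ext ((eq_inl a a.2.1).trans (eq_inl b b.2.1).symm)⟩
  exact Finite.card_le_one_iff_subsingleton.mpr this

variable {P y}

theorem nOnes_pendantGraph_inl {v : V} [Finite (G.neighborSet v)] [Finite (P v)]
    (hy : ∀ q : P v, y (.inr ⟨v, q⟩) = true) :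
    nOnes (pendantGraph G P) y (.inl v) = Nat.card (P v) + nOnes G (y ∘ Sum.inl) v := by
  have : Finite {w // G.Adj v w ∧ y (.inl w) = true} :=
    Finite.Set.subset (G.neighborSet v) fun _ hw => hw.1
  let leaves : P v ≃ {p : Σ w, P w //
      (pendantGraph G P).Adj (.inl v) (.inr p) ∧ y (.inr p) = true} :=
    { toFun q := ⟨⟨v, q⟩, rfl, hy q⟩
      invFun p := p.2.1 ▸ p.1.2
      left_inv _ := rfl
      right_inv := by
        rintro ⟨⟨_, q⟩, rfl, _⟩
        rfl }
  calc nOnes (pendantGraph G P) y (.inl v)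
      = Nat.card ({w // G.Adj v w ∧ y (.inl w) = true} ⊕ P v) :=
        Nat.card_congr (Equiv.subtypeSum.trans (Equiv.sumCongr (.refl _) leaves.symm))
    _ = nOnes G (y ∘ Sum.inl) v + Nat.card (P v) := Nat.card_sum
    _ = Nat.card (P v) + nOnes G (y ∘ Sum.inl) v := Nat.add_comm _ _

variable [G.LocallyFinite] [∀ v, Finite (P v)] {g : V → ℕ → ℝ} {c : V → ℝ}
  {g' : (V ⊕ Σ v, P v) → ℕ → ℝ} {c' : (V ⊕ Σ v, P v) → ℝ}

theorem isPSNE_pendantGraph_iff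
    (hleaf : ∀ p, ∀ m ≤ 1, c' (.inr p) < g' (.inr p) (m + 1) - g' (.inr p) m)
    (hbase : ∀ v, ∀ m ≤ G.degree v, ∀ a,
      IsBestResponse (g' (.inl v)) (c' (.inl v)) (Nat.card (P v) + m) a ↔
        IsBestResponse (g v) (c v) m a) :
    IsPSNE (pendantGraph G P) g' c' y ↔
      IsPSNE G g c (y ∘ Sum.inl) ∧ ∀ p, y (.inr p) = true := by
  have leaf_iff (p : Σ v, P v) :
      IsBestResponse (g' (.inr p)) (c' (.inr p)) (nOnes (pendantGraph G P) y (.inr p))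
        (y (.inr p)) ↔ y (.inr p) = true :=
    isBestResponse_iff_eq_true (hleaf p _ (nOnes_pendantGraph_inr_le_one G P y p))
  simp only [isPSNE_iff_forall_isBestResponse, Sum.forall, leaf_iff]
  refine and_congr_left fun hy => forall_congr' fun v => ?_
  rw [nOnes_pendantGraph_inl G fun q => hy ⟨v, q⟩]
  exact hbase v _ (nOnes_le_degree G _ v) _

theorem exists_isPSNE_pendantGraph_iff
    (hleaf : ∀ p, ∀ m ≤ 1, c' (.inr p) < g' (.inr p) (m + 1) - g' (.inr p) m)
    (hbase : ∀ v, ∀ m ≤ G.degree v, ∀ a,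
      IsBestResponse (g' (.inl v)) (c' (.inl v)) (Nat.card (P v) + m) a ↔
        IsBestResponse (g v) (c v) m a) :
    (∃ y, IsPSNE (pendantGraph G P) g' c' y) ↔ ∃ x, IsPSNE G g c x := by
  simp only [isPSNE_pendantGraph_iff G hleaf hbase]
  exact ⟨fun ⟨y, hy, _⟩ => ⟨y ∘ Sum.inl, hy⟩,
    fun ⟨x, hx⟩ => ⟨Sum.elim x fun _ => true, hx, fun _ => rfl⟩⟩

end PendantGraph

theorem homGraph_eq_pendantGraph {n : ℕ} (G₀ : SimpleGraph (Fin n)) :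
    homGraph G₀ = pendantGraph G₀ fun i => Fin (2 + (i : ℕ) * n) := by
  ext (i | p) (j | q)
  · simpa [homGraph, homRel, pendantGraph, G₀.adj_comm j i] using fun h : G₀.Adj i j => h.ne
  all_goals simp [homGraph, homRel, pendantGraph]

theorem hetero_iff_homo_general (n : ℕ) (G₀ : SimpleGraph (Fin n))
    (gG : Fin n → ℕ → ℝ) (cG : Fin n → ℝ) (g : ℕ → ℝ) (c : ℝ)
    (h0 : c < g 1 - g 0) (h1 : c < g 2 - g 1)
    (hg : ∀ (k : ℕ) (i : Fin n), 2 ≤ k → k ≤ n ^ 2 + 1 → (i : ℕ) = (k - 2) / n →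
      ((c ≤ g (k + 1) - g k ↔
          cG i ≤ gG i (k - 2 - (k - 2) / n * n + 1) - gG i (k - 2 - (k - 2) / n * n)) ∧
       (g (k + 1) - g k ≤ c ↔
          gG i (k - 2 - (k - 2) / n * n + 1) - gG i (k - 2 - (k - 2) / n * n) ≤ cG i))) :
    (∃ x : Fin n → Bool, IsPSNE G₀ gG cG x) ↔
      ∃ y : HomV n → Bool, IsPSNE (homGraph G₀) (fun _ => g) (fun _ => c) y := by
  classical
  rw [homGraph_eq_pendantGraph]
  refine (exists_isPSNE_pendantGraph_iff G₀ ?_ ?_).symm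
  · intro _ m hm
    interval_cases m
    exacts [h0, h1]
  · intro i m hm a
    have hmn : m < n := hm.trans_lt (by simpa using G₀.degree_lt_card_verts i)
    have hsub : 2 + (i : ℕ) * n + m - 2 = i * n + m := by omega
    have hdiv : (i * n + m) / n = (i : ℕ) :=
      Nat.div_eq_of_lt_le (Nat.le_add_right ..) (by rw [Nat.succ_mul]; omega)
    have hlt : i * n + m < n ^ 2 := by
      rw [sq, Nat.mul_comm (i : ℕ)]
      exact Nat.mul_add_lt_mul_of_lt_of_lt i.2 hmn
    have hrem : i * n + m - i * n = m := Nat.add_sub_cancel_left ..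
    have hk := hg (2 + i * n + m) i (by omega) (by omega) (by rw [hsub, hdiv])
    rw [hsub, hdiv, hrem] at hk
    rw [Nat.card_fin]
    exact isBestResponse_congr hk.1 hk.2 a

/-- Let `(G₀, gG, cG)` be a heterogeneous BNPG game with `n ≥ 1` players, and
let `(g, c)` be any fully homogeneous BNPG game on the graph `H` built from `G₀` satisfying
`Δg(0) > c`, `Δg(1) > c`, and, for every `2 ≤ k ≤ n² + 1` (writing `f(k) - 1 = (k-2)/n` for the
index `i` and `h(k) = k - 2 - ((k-2)/n)·n`): `Δg(k) ≥ c ↔ ΔgG_{v_{f(k)}}(h(k)) ≥ cG_{v_{f(k)}}`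
and `Δg(k) ≤ c ↔ ΔgG_{v_{f(k)}}(h(k)) ≤ cG_{v_{f(k)}}`.  Then the heterogeneous game on `G₀`
has a PSNE iff the fully homogeneous game `(g, c)` on `H` has a PSNE. -/
theorem hetero_iff_homo (n : ℕ) (hn : 1 ≤ n) (G₀ : SimpleGraph (Fin n))
    (gG : Fin n → ℕ → ℝ) (cG : Fin n → ℝ)
    (hMonoG : ∀ v, Monotone (gG v)) (hcG : ∀ v, 0 < cG v)
    (g : ℕ → ℝ) (c : ℝ) (hMono : Monotone g) (hc : 0 < c)
    (h0 : c < g 1 - g 0) (h1 : c < g 2 - g 1)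
    (hg : ∀ (k : ℕ) (i : Fin n), 2 ≤ k → k ≤ n ^ 2 + 1 → (i : ℕ) = (k - 2) / n →
      ((c ≤ g (k + 1) - g k ↔
          cG i ≤ gG i (k - 2 - (k - 2) / n * n + 1) - gG i (k - 2 - (k - 2) / n * n)) ∧
       (g (k + 1) - g k ≤ c ↔
          gG i (k - 2 - (k - 2) / n * n + 1) - gG i (k - 2 - (k - 2) / n * n) ≤ cG i))) :
    (∃ x : Fin n → Bool, IsPSNE G₀ gG cG x) ↔
      ∃ y : HomV n → Bool, IsPSNE (homGraph G₀) (fun _ => g) (fun _ => c) y :=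
  hetero_iff_homo_general n G₀ gG cG g c h0 h1 hg
end

section
/- For every integer k ≥ 0, the BNPG game on G with c_v = 1 and g_v(ℓ) = min(ℓ, d(v)) + 1 for every vertex v has a pure strategy Nash equilibrium in which at most k players play 0 if and only if G has a dominating set of size at most k. -/
/-!
A player's marginal gain from switching to `1` equals her cost while some neighbor plays `0`, and
drops below it once all her neighbors play `1`. So a player at `0` never gains by deviating, and a
player at `1` is content exactly when some neighbor plays `0`: a profile is an equilibrium iff the
set of players at `0` is dominating, and every set of vertices is the zero set of a profile.
-/

/-- `W` is a dominating set of `G`; such sets are the zero sets of the equilibria below. -/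
def IsDominatingSet {V : Type*} (G : SimpleGraph V) (W : Set V) : Prop :=
  ∀ v ∉ W, ∃ w ∈ W, G.Adj v w

section Neighbors

variable {V : Type*} (G : SimpleGraph V) (x : V → Bool) (v : V) [Finite (G.neighborSet v)]

theorem nOnes_le_card_neighborSet : nOnes G x v ≤ Nat.card (G.neighborSet v) :=
  Set.ncard_le_ncard (t := G.neighborSet v) fun _ hw => hw.1

theorem nOnes_eq_card_neighborSet_iff :
    nOnes G x v = Nat.card (G.neighborSet v) ↔ ∀ w, G.Adj v w → x w = true := by
  refine ⟨fun h w hw => Set.sep_of_ncard_eq (s := G.neighborSet v) h hw, fun h => ?_⟩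
  exact congrArg Set.ncard (Set.sep_eq_self_iff_mem_true.mpr h)

theorem nOnes_lt_card_neighborSet_iff :
    nOnes G x v < Nat.card (G.neighborSet v) ↔ ∃ w, x w = false ∧ G.Adj v w := by
  rw [(nOnes_le_card_neighborSet G x v).lt_iff_ne, Ne, nOnes_eq_card_neighborSet_iff]
  simp only [not_forall, Bool.not_eq_true, exists_prop, and_comm]

end Neighbors

section Equilibria

variable {V : Type*} {G : SimpleGraph V} [∀ v, Finite (G.neighborSet v)]
  {g : V → ℕ → ℝ} {c : V → ℝ}

theorem isPSNE_iff_isDominatingSet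
    (hlt : ∀ v, ∀ n < Nat.card (G.neighborSet v), g v (n + 1) - g v n = c v)
    (hdeg : ∀ v, g v (Nat.card (G.neighborSet v) + 1) - g v (Nat.card (G.neighborSet v)) < c v)
    (x : V → Bool) :
    IsPSNE G g c x ↔ IsDominatingSet G {v | x v = false} := by
  have marginal_le (v : V) : g v (nOnes G x v + 1) - g v (nOnes G x v) ≤ c v := by
    rcases (nOnes_le_card_neighborSet G x v).lt_or_eq with h | h
    · exact (hlt v _ h).le
    · rw [h]
      exact (hdeg v).le
  have le_marginal_iff (v : V) :
      c v ≤ g v (nOnes G x v + 1) - g v (nOnes G x v) ↔ ∃ w, x w = false ∧ G.Adj v w := by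
    rw [← nOnes_lt_card_neighborSet_iff]
    refine ⟨fun h => (nOnes_le_card_neighborSet G x v).lt_of_ne fun heq => ?_,
      fun h => (hlt v _ h).ge⟩
    rw [heq] at h
    exact (hdeg v).not_ge h
  simp only [IsPSNE, IsDominatingSet, marginal_le, le_marginal_iff, Set.mem_ofPred_eq,
    Bool.not_eq_false, implies_true, and_true]

theorem psne_few_zeros_iff_dominating_general
    (hlt : ∀ v, ∀ n < Nat.card (G.neighborSet v), g v (n + 1) - g v n = c v)
    (hdeg : ∀ v, g v (Nat.card (G.neighborSet v) + 1) - g v (Nat.card (G.neighborSet v)) < c v)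
    (P : Set V → Prop) :
    (∃ x : V → Bool, IsPSNE G g c x ∧ P {v | x v = false}) ↔
      ∃ W : Set V, IsDominatingSet G W ∧ P W := by
  classical
  have zeros_surjective : Function.Surjective fun x : V → Bool => {v | x v = false} :=
    fun W => ⟨fun v => decide (v ∉ W), by simp⟩
  simp only [isPSNE_iff_isDominatingSet hlt hdeg, zeros_surjective.exists]

end Equilibria

theorem truncated_marginal_of_lt {n d : ℕ} (h : n < d) :
    ((min (n + 1) d + 1 : ℕ) : ℝ) - ((min n d + 1 : ℕ) : ℝ) = 1 := by
  rw [min_eq_left h, min_eq_left h.le]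
  push_cast
  ring

theorem truncated_marginal_self (d : ℕ) :
    ((min (d + 1) d + 1 : ℕ) : ℝ) - ((min d d + 1 : ℕ) : ℝ) = 0 := by
  rw [min_eq_right d.le_succ, min_self, sub_self]

/-- For every `k ≥ 0`, the BNPG game on `G` with `c_v = 1` and
`g_v(ℓ) = min(ℓ, d(v)) + 1` (where `d(v)` is the degree of `v`) has a PSNE in which at most `k`
players play `0` iff `G` has a dominating set of size at most `k`. -/
theorem psne_few_zeros_iff_dominating {V : Type*} [Fintype V] (G : SimpleGraph V) (k : ℕ) :
    (∃ x : V → Bool,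
        IsPSNE G (fun v ℓ => ((min ℓ (Nat.card (G.neighborSet v)) + 1 : ℕ) : ℝ))
          (fun _ => 1) x ∧
        Nat.card {v : V // x v = false} ≤ k) ↔
      ∃ W : Set V, (∀ v ∉ W, ∃ w ∈ W, G.Adj v w) ∧ W.ncard ≤ k :=
  psne_few_zeros_iff_dominating_general (fun _ _ h => truncated_marginal_of_lt h)
    (fun _ => (truncated_marginal_self _).trans_lt one_pos) fun W => W.ncard ≤ k
end

section
/- For every integer k ≥ 0, the fully homogeneous BNPG game on G with c = 1, g(0) = 1 and g(ℓ) = ℓ + 2 for ℓ ≥ 1 has a pure strategy Nash equilibrium in which at most k players play 1 if and only if G has a dominating set of size at most k. -/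
/-!
A player gains exactly her cost by contributing, unless no neighbor contributes, when she gains
strictly more. So a player contributing `1` never wants to deviate, and a player contributing `0`
wants to deviate iff no neighbor contributes: a profile in which every player has finitely many
contributing neighbors is an equilibrium iff its set of ones is dominating.
-/

/-- `W` is a dominating set of `G`. -/
def IsDominating {V : Type*} (G : SimpleGraph V) (W : Set V) : Prop :=
  ∀ v ∉ W, ∃ w ∈ W, G.Adj v w

/-- The payoffs `g` and costs `c` of BNPG games whose equilibria encode domination: the first unit
of the public good that reaches a player is worth strictly more to her than her cost, and each
further unit is worth exactly her cost. -/
structure OnlyFirstUnitProfitable {V : Type*} (g : V → ℕ → ℝ) (c : V → ℝ) : Prop where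
  cost_lt_first_gain : ∀ v, c v < g v 1 - g v 0
  later_gain_eq_cost : ∀ v, ∀ ℓ ≠ 0, g v (ℓ + 1) - g v ℓ = c v

section

variable {V : Type*} {G : SimpleGraph V} {g : V → ℕ → ℝ} {c : V → ℝ} {x : V → Bool}

theorem OnlyFirstUnitProfitable.cost_le_gain (hgc : OnlyFirstUnitProfitable g c) (v : V) (ℓ : ℕ) :
    c v ≤ g v (ℓ + 1) - g v ℓ := by
  rcases eq_or_ne ℓ 0 with rfl | hℓ
  · exact (hgc.cost_lt_first_gain v).le
  · exact (hgc.later_gain_eq_cost v ℓ hℓ).ge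

theorem OnlyFirstUnitProfitable.gain_le_cost_iff (hgc : OnlyFirstUnitProfitable g c) (v : V)
    (ℓ : ℕ) : g v (ℓ + 1) - g v ℓ ≤ c v ↔ ℓ ≠ 0 := by
  refine ⟨?_, fun hℓ => (hgc.later_gain_eq_cost v ℓ hℓ).le⟩
  rintro hle rfl
  exact (hgc.cost_lt_first_gain v).not_ge hle

theorem OnlyFirstUnitProfitable.isPSNE_iff_nOnes_ne_zero (hgc : OnlyFirstUnitProfitable g c) :
    IsPSNE G g c x ↔ ∀ v, x v = false → nOnes G x v ≠ 0 :=
  forall_congr' fun v => by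
    simp only [hgc.cost_le_gain, hgc.gain_le_cost_iff, implies_true, true_and]

-- For infinitely many contributing neighbors, `nOnes` takes the junk value `0`.
theorem nOnes_ne_zero_iff {v : V} (hfin : {w | G.Adj v w ∧ x w = true}.Finite) :
    nOnes G x v ≠ 0 ↔ ∃ w ∈ x ⁻¹' {true}, G.Adj v w := by
  have : Finite {w : V // G.Adj v w ∧ x w = true} := hfin
  rw [nOnes, Nat.card_ne_zero, and_iff_left this, nonempty_subtype]
  exact exists_congr fun _ => and_comm

theorem OnlyFirstUnitProfitable.isPSNE_iff_isDominating (hgc : OnlyFirstUnitProfitable g c)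
    (hfin : ∀ v, {w | G.Adj v w ∧ x w = true}.Finite) :
    IsPSNE G g c x ↔ IsDominating G (x ⁻¹' {true}) := by
  simp only [hgc.isPSNE_iff_nOnes_ne_zero, nOnes_ne_zero_iff (hfin _), IsDominating,
    Set.mem_preimage, Set.mem_singleton_iff, Bool.not_eq_true]

end

-- `encard` rather than `ncard`: an infinite set must not count as one of size `0`.
theorem psne_few_ones_iff_dominating_general {V : Type*} (G : SimpleGraph V) {g : V → ℕ → ℝ}
    {c : V → ℝ} (hgc : OnlyFirstUnitProfitable g c) (k : ℕ) :
    (∃ x : V → Bool, IsPSNE G g c x ∧ (x ⁻¹' {true}).encard ≤ k) ↔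
      ∃ W : Set V, IsDominating G W ∧ W.encard ≤ k := by
  have psne_iff (x : V → Bool) (hk : (x ⁻¹' {true}).encard ≤ k) :
      IsPSNE G g c x ↔ IsDominating G (x ⁻¹' {true}) :=
    hgc.isPSNE_iff_isDominating fun _ =>
      (Set.finite_of_encard_le_coe hk).subset fun _ hw => hw.2
  constructor
  · rintro ⟨x, hx, hk⟩
    exact ⟨x ⁻¹' {true}, (psne_iff x hk).1 hx, hk⟩
  · rintro ⟨W, hW, hk⟩
    obtain ⟨x, rfl⟩ : ∃ x : V → Bool, x ⁻¹' {true} = W :=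
      ⟨W.boolIndicator, W.preimage_boolIndicator_true⟩
    exact ⟨x, (psne_iff x hk).2 hW, hk⟩

theorem onlyFirstUnitProfitable_add_two (V : Type*) :
    OnlyFirstUnitProfitable (fun (_ : V) ℓ => if ℓ = 0 then (1 : ℝ) else (ℓ : ℝ) + 2)
      (fun _ => 1) where
  cost_lt_first_gain _ := by norm_num
  later_gain_eq_cost _ ℓ hℓ := by
    simp only [hℓ, ℓ.succ_ne_zero, if_false]
    push_cast
    ring

/-- For every `k ≥ 0`, the fully homogeneous BNPG game on `G` with `c = 1`,
`g(0) = 1` and `g(ℓ) = ℓ + 2` for `ℓ ≥ 1` has a PSNE in which at most `k` players play `1` iff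
`G` has a dominating set of size at most `k`. -/
theorem psne_few_ones_iff_dominating {V : Type*} [Fintype V] (G : SimpleGraph V) (k : ℕ) :
    (∃ x : V → Bool,
        IsPSNE G (fun _ ℓ => if ℓ = 0 then (1 : ℝ) else (ℓ : ℝ) + 2) (fun _ => 1) x ∧
        Nat.card {v : V // x v = true} ≤ k) ↔
      ∃ W : Set V, (∀ v ∉ W, ∃ w ∈ W, G.Adj v w) ∧ W.ncard ≤ k := by
  simpa only [Set.encard_le_coe_iff_finite_ncard_le, Set.toFinite, true_and] using!
    psne_few_ones_iff_dominating_general G (onlyFirstUnitProfitable_add_two V) k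
end

section
/- Let (G = (V, E), (g_v), (c_v)) be a BNPG game, let S ⊆ V, and let x : V → {0,1} be a pure strategy Nash equilibrium. For each v ∈ S let m_v be the number of neighbors w of v outside S with x_w = 1, and define g′_v(k) = g_v(k + m_v). Then the restriction of x to S is a PSNE of the BNPG game on the induced subgraph G[S] with functions (g′_v)_{v ∈ S} and constants (c_v)_{v ∈ S}. -/
section ActiveNeighbors

variable {V : Type*} (G : SimpleGraph V) (x : V → Bool)

/-- The neighbors of `v` that play `1` in the profile `x`, as a set; `nOnes G x v` is their
number, so the counting lemmas for `Set.ncard` apply to it. -/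
def activeNeighbors (v : V) : Set V :=
  {w | G.Adj v w ∧ x w = true}

theorem ncard_activeNeighbors (v : V) : (activeNeighbors G x v).ncard = nOnes G x v :=
  (Nat.card_coe_set_eq _).symm

theorem ncard_activeNeighbors_sdiff (v : V) (S : Set V) :
    (activeNeighbors G x v \ S).ncard = Nat.card {w : V // w ∉ S ∧ G.Adj v w ∧ x w = true} :=
  (Nat.card_coe_set_eq _).symm.trans (Nat.card_congr (Equiv.subtypeEquivRight fun _ => and_comm))

theorem image_val_activeNeighbors_induce (S : Set V) (v : S) :
    Subtype.val '' activeNeighbors (G.induce S) (fun w => x w) v = activeNeighbors G x v ∩ S :=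
  (Subtype.image_preimage_val S (activeNeighbors G x v)).trans (Set.inter_comm _ _)

theorem nOnes_induce (S : Set V) (v : S) :
    nOnes (G.induce S) (fun w => x w) v = (activeNeighbors G x v ∩ S).ncard := by
  rw [← ncard_activeNeighbors, ← image_val_activeNeighbors_induce,
    Set.ncard_image_of_injective _ Subtype.val_injective]

variable {G x}

theorem nOnes_induce_add_ncard_sdiff {S : Set V} (v : S) (hfin : (activeNeighbors G x v).Finite) :
    nOnes (G.induce S) (fun w => x w) v + (activeNeighbors G x v \ S).ncard = nOnes G x v := by
  rw [nOnes_induce, Set.ncard_inter_add_ncard_sdiff_eq_ncard _ _ hfin, ncard_activeNeighbors]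

end ActiveNeighbors

theorem IsPSNE.comap_of_nOnes_add_eq {V W : Type*} {G : SimpleGraph V} {H : SimpleGraph W}
    {g : V → ℕ → ℝ} {c : V → ℝ} {x : V → Bool} (hx : IsPSNE G g c x) (f : W → V) (m : W → ℕ)
    (hm : ∀ w, nOnes H (x ∘ f) w + m w = nOnes G x (f w)) :
    IsPSNE H (fun w k => g (f w) (k + m w)) (c ∘ f) (x ∘ f) := by
  intro w
  have h := hx (f w)
  rw [← hm w] at h
  simpa only [Function.comp_apply, add_right_comm] using h

theorem psne_restrict_induced_general {V : Type*} {G : SimpleGraph V} {g : V → ℕ → ℝ} {c : V → ℝ}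
    {S : Set V} {x : V → Bool} (hx : IsPSNE G g c x)
    (hfin : ∀ v ∈ S, (activeNeighbors G x v).Finite)
    (m : V → ℕ) (hm : ∀ v ∈ S, m v = (activeNeighbors G x v \ S).ncard) :
    IsPSNE (G.induce S) (fun v k => g v (k + m v)) (fun v => c v) (fun v => x v) :=
  hx.comap_of_nOnes_add_eq Subtype.val (fun v => m v) fun v =>
    (congrArg _ (hm v v.2)).trans (nOnes_induce_add_ncard_sdiff v (hfin v v.2))

/-- Let `(G, g, c)` be a BNPG game, `S ⊆ V`, and `x` a PSNE.  For each
`v ∈ S` let `m_v` be the number of neighbors `w ∉ S` of `v` with `x_w = 1`, and set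
`g′_v(k) = g_v(k + m_v)`.  Then the restriction of `x` to `S` is a PSNE of the BNPG game on the
induced subgraph `G[S]` with functions `(g′_v)_{v ∈ S}` and constants `(c_v)_{v ∈ S}`. -/
theorem psne_restrict_induced {V : Type*} [Fintype V] (G : SimpleGraph V)
    (g : V → ℕ → ℝ) (c : V → ℝ)
    (hMono : ∀ v, Monotone (g v)) (hc : ∀ v, 0 < c v)
    (S : Set V) (x : V → Bool) (hx : IsPSNE G g c x)
    (m : V → ℕ) (hm : ∀ v : V, m v = Nat.card {w : V // w ∉ S ∧ G.Adj v w ∧ x w = true}) :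
    IsPSNE (G.induce S) (fun v k => g v.1 (k + m v.1)) (fun v => c v.1)
      (fun v => x v.1) :=
  psne_restrict_induced_general hx (fun _ _ => Set.toFinite _) m fun v _ =>
    (hm v).trans (ncard_activeNeighbors_sdiff G x v S).symm
end

section
/- Every fully homogeneous BNPG game on a path (vertices v_1,…,v_n with edges {v_i, v_{i+1}} for 1 ≤ i ≤ n−1, n ≥ 1) has a pure strategy Nash equilibrium. -/
/-!
In a fully homogeneous game the players of a set `D` contribute in equilibrium exactly when every
vertex of `D` has a number of neighbors in `D` belonging to `σ = {k | c ≤ g (k + 1) - g k}` and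
every other vertex a number belonging to `ρ = {k | g (k + 1) - g k ≤ c}`. These two sets cover `ℕ`,
and on a path only the counts `0`, `1`, `2` occur. If `0 ∈ ρ`, the empty set works. Otherwise
`0 ∈ σ`, and a periodic set works: all vertices if `1, 2 ∈ σ`, two out of every three if `1 ∈ σ` and
`2 ∈ ρ`, every third if `1 ∈ ρ` and `2 ∈ σ`, and every second if `1, 2 ∈ ρ`.
-/

/-- A `(σ, ρ)`-set of a graph, in the sense of generalized domination: the number of neighbors
in `D` lies in `σ` for the vertices of `D` and in `ρ` for all others. Since `Set.ncard` is `0` on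
infinite sets, a vertex with infinitely many neighbors in `D` counts as having none. -/
def IsSigmaRhoSet {V : Type*} (G : SimpleGraph V) (σ ρ : Set ℕ) (D : Set V) : Prop :=
  ∀ v, (v ∈ D → (G.neighborSet v ∩ D).ncard ∈ σ) ∧ (v ∉ D → (G.neighborSet v ∩ D).ncard ∈ ρ)

section General

variable {V : Type*} {G : SimpleGraph V} {σ σ' ρ ρ' : Set ℕ} {D : Set V}

lemma IsSigmaRhoSet.mono (hD : IsSigmaRhoSet G σ ρ D) (hσ : σ ⊆ σ') (hρ : ρ ⊆ ρ') :
    IsSigmaRhoSet G σ' ρ' D :=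
  fun v => ⟨fun hv => hσ ((hD v).1 hv), fun hv => hρ ((hD v).2 hv)⟩

lemma isSigmaRhoSet_empty (G : SimpleGraph V) : IsSigmaRhoSet G ∅ {0} ∅ := by
  simp [IsSigmaRhoSet]

lemma nOnes_decide_mem (G : SimpleGraph V) (D : Set V) [DecidablePred (· ∈ D)] (v : V) :
    nOnes G (fun w => decide (w ∈ D)) v = (G.neighborSet v ∩ D).ncard := by
  simp only [nOnes, decide_eq_true_eq]
  exact Nat.card_coe_set_eq (G.neighborSet v ∩ D)

lemma isPSNE_decide_mem_iff (G : SimpleGraph V) (g : ℕ → ℝ) (c : ℝ) (D : Set V)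
    [DecidablePred (· ∈ D)] :
    IsPSNE G (fun _ => g) (fun _ => c) (fun v => decide (v ∈ D)) ↔
      IsSigmaRhoSet G {k | c ≤ g (k + 1) - g k} {k | g (k + 1) - g k ≤ c} D := by
  simp only [IsPSNE, IsSigmaRhoSet, nOnes_decide_mem, decide_eq_true_eq, decide_eq_false_iff_not,
    Set.mem_ofPred_eq]

end General

section Path

open SimpleGraph (pathGraph pathGraph_adj)

lemma ncard_setOf_val_eq_and {n : ℕ} (k : ℕ) (p : ℕ → Prop) [DecidablePred p] :
    {w : Fin n | w.val = k ∧ p w}.ncard = if k < n ∧ p k then 1 else 0 := by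
  split_ifs with h
  · refine Set.ncard_eq_one.2 ⟨⟨k, h.1⟩, Set.ext fun w => ?_⟩
    simp only [Set.mem_ofPred_eq, Set.mem_singleton_iff, Fin.ext_iff]
    exact ⟨And.left, fun hw => ⟨hw, hw ▸ h.2⟩⟩
  · have hempty : {w : Fin n | w.val = k ∧ p w} = ∅ :=
      Set.eq_empty_of_forall_notMem fun w ⟨hwk, hw⟩ => h (hwk ▸ ⟨w.isLt, hw⟩)
    rw [hempty, Set.ncard_empty]

lemma ncard_pathGraph_neighborSet_inter {n : ℕ} (p : ℕ → Prop) [DecidablePred p] (v : Fin n) :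
    ((pathGraph n).neighborSet v ∩ {w | p w}).ncard =
      (if v.val + 1 < n ∧ p (v + 1) then 1 else 0) +
        (if 0 < v.val ∧ p (v - 1) then 1 else 0) := by
  have hsplit : (pathGraph n).neighborSet v ∩ {w | p w} =
      {w : Fin n | w.val = v + 1 ∧ p w} ∪ {w : Fin n | w.val = v - 1 ∧ 0 < v.val ∧ p w} := by
    ext w
    simp only [Set.mem_inter_iff, SimpleGraph.mem_neighborSet, pathGraph_adj, Set.mem_ofPred_eq,
      Set.mem_union]
    grind
  have hdisj : Disjoint {w : Fin n | w.val = v + 1 ∧ p w}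
      {w : Fin n | w.val = v - 1 ∧ 0 < v.val ∧ p w} :=
    Set.disjoint_left.2 fun w hsucc hpred => by
      have := hsucc.1
      have := hpred.1
      omega
  have hlt : v.val - 1 < n := by omega
  rw [hsplit, Set.ncard_union_eq hdisj, ncard_setOf_val_eq_and,
    ncard_setOf_val_eq_and (v.val - 1) fun i => 0 < v.val ∧ p i]
  simp only [hlt, true_and]

lemma isSigmaRhoSet_pathGraph_iff {n : ℕ} {σ ρ : Set ℕ} (p : ℕ → Prop) [DecidablePred p] :
    IsSigmaRhoSet (pathGraph n) σ ρ {v | p v} ↔ ∀ i < n,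
      (p i → (if i + 1 < n ∧ p (i + 1) then 1 else 0) + (if 0 < i ∧ p (i - 1) then 1 else 0) ∈ σ) ∧
      (¬p i →
        (if i + 1 < n ∧ p (i + 1) then 1 else 0) + (if 0 < i ∧ p (i - 1) then 1 else 0) ∈ ρ) := by
  simp only [IsSigmaRhoSet, ncard_pathGraph_neighborSet_inter, Set.mem_ofPred_eq, Fin.forall_iff]

lemma isSigmaRhoSet_pathGraph_univ (n : ℕ) :
    IsSigmaRhoSet (pathGraph n) {0, 1, 2} ∅ Set.univ := by
  refine (isSigmaRhoSet_pathGraph_iff fun _ => True).2 fun i _ => ⟨fun _ => ?_, fun h => h trivial⟩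
  split_ifs <;> simp

lemma isSigmaRhoSet_pathGraph_even (n : ℕ) :
    IsSigmaRhoSet (pathGraph n) {0} {1, 2} {v | v.val % 2 = 0} := by
  refine (isSigmaRhoSet_pathGraph_iff fun i => i % 2 = 0).2 fun i _ => ?_
  simp only [Set.mem_singleton_iff, Set.mem_insert_iff]
  split_ifs <;> omega

-- The residue is chosen so that the first and the last vertex are each in the set or next to it.
lemma isSigmaRhoSet_pathGraph_third (n : ℕ) :
    IsSigmaRhoSet (pathGraph n) {0} {1} {v | v.val % 3 = if n % 3 = 0 then 1 else 0} := by
  refine (isSigmaRhoSet_pathGraph_iff fun i => i % 3 = if n % 3 = 0 then 1 else 0).2 fun i hi => ?_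
  simp only [Set.mem_singleton_iff]
  split_ifs <;> omega

-- The residue is chosen so that neither end of the path is left out of the set.
lemma isSigmaRhoSet_pathGraph_two_thirds (n : ℕ) :
    IsSigmaRhoSet (pathGraph n) {0, 1} {2} {v | v.val % 3 ≠ if n % 3 = 2 then 2 else 1} := by
  refine (isSigmaRhoSet_pathGraph_iff fun i => i % 3 ≠ if n % 3 = 2 then 2 else 1).2 fun i hi => ?_
  simp only [Set.mem_singleton_iff, Set.mem_insert_iff]
  split_ifs <;> omega

theorem exists_isSigmaRhoSet_pathGraph (n : ℕ) {σ ρ : Set ℕ} (h : ∀ k ≤ 2, k ∈ σ ∨ k ∈ ρ) :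
    ∃ D, IsSigmaRhoSet (pathGraph n) σ ρ D := by
  rcases h 0 (by norm_num) with h0 | h0
  · rcases h 1 (by norm_num) with h1 | h1 <;> rcases h 2 le_rfl with h2 | h2
    · exact ⟨_, (isSigmaRhoSet_pathGraph_univ n).mono (by grind) (Set.empty_subset ρ)⟩
    · exact ⟨_, (isSigmaRhoSet_pathGraph_two_thirds n).mono (by grind) (by grind)⟩
    · exact ⟨_, (isSigmaRhoSet_pathGraph_third n).mono (by grind) (by grind)⟩
    · exact ⟨_, (isSigmaRhoSet_pathGraph_even n).mono (by grind) (by grind)⟩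
  · exact ⟨∅, (isSigmaRhoSet_empty _).mono (Set.empty_subset σ) (by grind)⟩

end Path

theorem path_psne_general (n : ℕ) (g : ℕ → ℝ) (c : ℝ) :
    ∃ x : Fin n → Bool, IsPSNE (SimpleGraph.pathGraph n) (fun _ => g) (fun _ => c) x := by
  classical
  obtain ⟨D, hD⟩ := exists_isSigmaRhoSet_pathGraph n
    (σ := {k | c ≤ g (k + 1) - g k}) (ρ := {k | g (k + 1) - g k ≤ c})
    fun k _ => le_total c (g (k + 1) - g k)
  exact ⟨fun v => decide (v ∈ D), (isPSNE_decide_mem_iff _ g c D).2 hD⟩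

/-- Every fully homogeneous BNPG game on a path with `n ≥ 1` vertices has a
pure strategy Nash equilibrium. -/
theorem path_psne (n : ℕ) (hn : 1 ≤ n) (g : ℕ → ℝ) (c : ℝ)
    (hMono : Monotone g) (hc : 0 < c) :
    ∃ x : Fin n → Bool, IsPSNE (SimpleGraph.pathGraph n) (fun _ => g) (fun _ => c) x :=
  path_psne_general n g c
end
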